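/- Let B be a bialgebra over K. For all p, q ≥ 1 the horizontal and vertical differentials commute: δ_c^{p,q+1} ∘ δ_h^{p,q} = δ_h^{p+1,q} ∘ δ_c^{p,q}, so that (C^{p,q}, δ_h, δ_c) is a bicomplex. -/

import Mathlib

open TensorProduct

namespace GBD

variable (K B : Type*) [Field K] [Ring B] [Bialgebra K B]

/-- The `n`-th tensor power `B^{⊗n}`. -/
abbrev T (n : ℕ) := PiTensorProduct K (fun _ : Fin n => B)

/-- Splitting off the first tensor factor: `B^{⊗(n+1)} ≃ B ⊗ B^{⊗n}`. -/
noncomputable def split (n : ℕ) : T K B (n + 1) ≃ₗ[K] B ⊗[K] T K B n :=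
  ((PiTensorProduct.reindex K (fun _ : Fin (n+1) => B)
      ((finCongr (Nat.add_comm 1 n)).symm.trans finSumFinEquiv.symm)).trans
    (PiTensorProduct.tmulEquiv K B).symm).trans
      (TensorProduct.congr (PiTensorProduct.subsingletonEquiv (0 : Fin 1))
        (LinearEquiv.refl K _))

/-- Splitting off the last tensor factor: `B^{⊗(n+1)} ≃ B^{⊗n} ⊗ B`. -/
noncomputable def splitLast (n : ℕ) : T K B (n + 1) ≃ₗ[K] T K B n ⊗[K] B :=
  ((PiTensorProduct.reindex K (fun _ : Fin (n+1) => B) finSumFinEquiv.symm).trans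
    (PiTensorProduct.tmulEquiv K B).symm).trans
      (TensorProduct.congr (LinearEquiv.refl K _)
        (PiTensorProduct.subsingletonEquiv (0 : Fin 1)))

/-- Iterated comultiplication `Δ^{(n)} : B → B^{⊗n}` (with `Δ^{(0)} = ε`, `Δ^{(1)} = Id`). -/
noncomputable def iterComul : (n : ℕ) → (B →ₗ[K] T K B n)
  | 0 => (PiTensorProduct.isEmptyEquiv (Fin 0)).symm.toLinearMap ∘ₗ
      (Coalgebra.counit (R := K) (A := B))
  | (n + 1) => (split K B n).symm.toLinearMap ∘ₗ
      LinearMap.lTensor B (iterComul n) ∘ₗ (Coalgebra.comul (R := K) (A := B))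

/-- Componentwise comultiplication `B^{⊗n} → B^{⊗n} ⊗ B^{⊗n}`,
`b¹⊗⋯⊗bⁿ ↦ (b¹₍₁₎⊗⋯⊗bⁿ₍₁₎) ⊗ (b¹₍₂₎⊗⋯⊗bⁿ₍₂₎)`. -/
noncomputable def comulT : (n : ℕ) → (T K B n →ₗ[K] T K B n ⊗[K] T K B n)
  | 0 => (TensorProduct.congr (PiTensorProduct.isEmptyEquiv (Fin 0)).symm
        (PiTensorProduct.isEmptyEquiv (Fin 0)).symm).toLinearMap ∘ₗ
      (TensorProduct.lid K K).symm.toLinearMap ∘ₗ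
        (PiTensorProduct.isEmptyEquiv (Fin 0)).toLinearMap
  | (n + 1) =>
      (TensorProduct.congr (split K B n).symm (split K B n).symm).toLinearMap ∘ₗ
        (TensorProduct.tensorTensorTensorComm K B B (T K B n) (T K B n)).toLinearMap ∘ₗ
          TensorProduct.map (Coalgebra.comul (R := K) (A := B)) (comulT n) ∘ₗ
            (split K B n).toLinearMap

/-- The product of all tensor factors, `B^{⊗n} → B`, `b¹⊗⋯⊗bⁿ ↦ b¹⋯bⁿ`. -/
noncomputable def prodT (n : ℕ) : T K B n →ₗ[K] B :=
  PiTensorProduct.lift (MultilinearMap.mkPiAlgebraFin K n B)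

/-- `μ_i : B^{⊗(q+1)} → B^{⊗q}` multiplying the `i`-th and `(i+1)`-th factors
(`i` is 0-indexed here). -/
noncomputable def mulAt : (q : ℕ) → ℕ → (T K B (q + 1) →ₗ[K] T K B q)
  | 0, _ => 0
  | (q + 1), 0 => (split K B q).symm.toLinearMap ∘ₗ
      LinearMap.rTensor (T K B q) (LinearMap.mul' K B) ∘ₗ
        (TensorProduct.assoc K B B (T K B q)).symm.toLinearMap ∘ₗ
          LinearMap.lTensor B (split K B q).toLinearMap ∘ₗ
            (split K B (q + 1)).toLinearMap
  | (q + 1), (i + 1) => (split K B q).symm.toLinearMap ∘ₗ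
      LinearMap.lTensor B (mulAt q i) ∘ₗ (split K B (q + 1)).toLinearMap

/-- `Δ_j : B^{⊗p} → B^{⊗(p+1)}` applying `Δ` to the `j`-th factor (`j` is 0-indexed). -/
noncomputable def comulAt : (p : ℕ) → ℕ → (T K B p →ₗ[K] T K B (p + 1))
  | 0, _ => 0
  | (p + 1), 0 => (split K B (p + 1)).symm.toLinearMap ∘ₗ
      LinearMap.lTensor B (split K B p).symm.toLinearMap ∘ₗ
        (TensorProduct.assoc K B B (T K B p)).toLinearMap ∘ₗ
          LinearMap.rTensor (T K B p) (Coalgebra.comul (R := K) (A := B)) ∘ₗ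
            (split K B p).toLinearMap
  | (p + 1), (i + 1) => (split K B (p + 1)).symm.toLinearMap ∘ₗ
      LinearMap.lTensor B (comulAt p i) ∘ₗ (split K B p).toLinearMap

/-- `λ^p : B^{⊗(p+1)} → B^{⊗p}`, `b¹⊗b²⊗⋯⊗b^{p+1} ↦ b¹₍₁₎b² ⊗ ⋯ ⊗ b¹₍ₚ₎b^{p+1}`. -/
noncomputable def lamMap (p : ℕ) : T K B (p + 1) →ₗ[K] T K B p :=
  LinearMap.mul' K (T K B p) ∘ₗ TensorProduct.map (iterComul K B p) LinearMap.id ∘ₗ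
    (split K B p).toLinearMap

/-- `ρ^p : B^{⊗(p+1)} → B^{⊗p}`, `b¹⊗⋯⊗b^p⊗b^{p+1} ↦ b¹b^{p+1}₍₁₎ ⊗ ⋯ ⊗ b^p b^{p+1}₍ₚ₎`. -/
noncomputable def rhoMap (p : ℕ) : T K B (p + 1) →ₗ[K] T K B p :=
  LinearMap.mul' K (T K B p) ∘ₗ TensorProduct.map LinearMap.id (iterComul K B p) ∘ₗ
    (splitLast K B p).toLinearMap

/-- `σ^q : B^{⊗q} → B^{⊗(q+1)}`, `b¹⊗⋯⊗b^q ↦ (b¹₍₁₎⋯b^q₍₁₎) ⊗ b¹₍₂₎ ⊗ ⋯ ⊗ b^q₍₂₎`. -/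
noncomputable def sigmaMap (q : ℕ) : T K B q →ₗ[K] T K B (q + 1) :=
  (split K B q).symm.toLinearMap ∘ₗ
    TensorProduct.map (prodT K B q) LinearMap.id ∘ₗ comulT K B q

/-- `τ^q : B^{⊗q} → B^{⊗(q+1)}`, `b¹⊗⋯⊗b^q ↦ b¹₍₁₎ ⊗ ⋯ ⊗ b^q₍₁₎ ⊗ (b¹₍₂₎⋯b^q₍₂₎)`. -/
noncomputable def tauMap (q : ℕ) : T K B q →ₗ[K] T K B (q + 1) :=
  (splitLast K B q).symm.toLinearMap ∘ₗ
    TensorProduct.map LinearMap.id (prodT K B q) ∘ₗ comulT K B q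

/-- The horizontal (Hochschild-type) differential
`δ_h^{p,q} : Hom(B^{⊗q}, B^{⊗p}) → Hom(B^{⊗(q+1)}, B^{⊗p})`. -/
noncomputable def deltaH (p q : ℕ) (f : T K B q →ₗ[K] T K B p) :
    T K B (q + 1) →ₗ[K] T K B p :=
  lamMap K B p ∘ₗ (split K B p).symm.toLinearMap ∘ₗ LinearMap.lTensor B f ∘ₗ
      (split K B q).toLinearMap
    + ∑ i ∈ Finset.range q, ((-1 : ℤ) ^ (i + 1)) • (f ∘ₗ mulAt K B q i)
    + ((-1 : ℤ) ^ (q + 1)) •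
        (rhoMap K B p ∘ₗ (splitLast K B p).symm.toLinearMap ∘ₗ LinearMap.rTensor B f ∘ₗ
          (splitLast K B q).toLinearMap)

/-- The vertical (coHochschild-type) differential
`δ_c^{p,q} : Hom(B^{⊗q}, B^{⊗p}) → Hom(B^{⊗q}, B^{⊗(p+1)})`. -/
noncomputable def deltaCv (p q : ℕ) (f : T K B q →ₗ[K] T K B p) :
    T K B q →ₗ[K] T K B (p + 1) :=
  (split K B p).symm.toLinearMap ∘ₗ LinearMap.lTensor B f ∘ₗ (split K B q).toLinearMap ∘ₗ
      sigmaMap K B q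
    + ∑ j ∈ Finset.range p, ((-1 : ℤ) ^ (j + 1)) • (comulAt K B p j ∘ₗ f)
    + ((-1 : ℤ) ^ (p + 1)) •
        ((splitLast K B p).symm.toLinearMap ∘ₗ LinearMap.rTensor B f ∘ₗ
          (splitLast K B q).toLinearMap ∘ₗ tauMap K B q)

/-! The bicomplex is bicosimplicial: `δ_h` and `δ_c` are the alternating sums of
`hochschildCoface K B p q i` and `cohochschildCoface K B p q j`, and every coface of one direction
commutes with every coface of the other. For the inner cofaces `f ↦ f ∘ μ_i` this holds because
`μ_i` is compatible with componentwise comultiplication and with `prodT`. For the outer ones, the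
actions of `B` through `Δ^{(p)}`, it holds because `Δ_j` and the two concatenations
`B ⊗ B^{⊗p} ≃ B^{⊗(p+1)} ≃ B^{⊗p} ⊗ B` are algebra maps, and applying `Δ_j` to `Δ^{(p)}`, or
concatenating `(Id ⊗ Δ^{(p)}) ∘ Δ` or `(Δ^{(p)} ⊗ Id) ∘ Δ`, gives `Δ^{(p+1)}`. -/

section TensorProductMap₂

variable {R M M' N N' P P' Q Q' S S' U U' : Type*} [CommSemiring R]
  [AddCommMonoid M] [Module R M] [AddCommMonoid M'] [Module R M']
  [AddCommMonoid N] [Module R N] [AddCommMonoid N'] [Module R N']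
  [AddCommMonoid P] [Module R P] [AddCommMonoid P'] [Module R P']
  [AddCommMonoid Q] [Module R Q] [AddCommMonoid Q'] [Module R Q']
  [AddCommMonoid S] [Module R S] [AddCommMonoid S'] [Module R S']
  [AddCommMonoid U] [Module R U] [AddCommMonoid U'] [Module R U']

theorem map_map₂ {f : M →ₗ[R] N →ₗ[R] P} {f' : M' →ₗ[R] N' →ₗ[R] P'}
    {g : Q →ₗ[R] S →ₗ[R] U} {g' : Q' →ₗ[R] S' →ₗ[R] U'}
    {h : P →ₗ[R] U} {h' : P' →ₗ[R] U'} {a : M →ₗ[R] Q} {a' : M' →ₗ[R] Q'}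
    {b : N →ₗ[R] S} {b' : N' →ₗ[R] S'} (H : ∀ m n, h (f m n) = g (a m) (b n))
    (H' : ∀ m n, h' (f' m n) = g' (a' m) (b' n)) (x : M ⊗[R] M') (y : N ⊗[R] N') :
    map h h' (map₂ f f' x y) = map₂ g g' (map a a' x) (map b b' y) := by
  have bilinear_eq : (map₂ f f').compr₂ (map h h') = (map₂ g g').compl₁₂ (map a a') (map b b') := by
    ext m m' n n'
    simp [H, H']
  exact LinearMap.congr_fun₂ bilinear_eq x y

theorem map_map₂_eq_map₂_compr₂ (f : M →ₗ[R] N →ₗ[R] P) (f' : M' →ₗ[R] N' →ₗ[R] P')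
    (h : P →ₗ[R] U) (h' : P' →ₗ[R] U') (x : M ⊗[R] M') (y : N ⊗[R] N') :
    map h h' (map₂ f f' x y) = map₂ (f.compr₂ h) (f'.compr₂ h') x y := by
  simpa using map_map₂ (a := .id) (a' := .id) (b := .id) (b' := .id)
    (fun _ _ => rfl) (fun _ _ => rfl) x y

theorem map₂_assoc {f : Q →ₗ[R] P →ₗ[R] U} {f' : Q' →ₗ[R] P' →ₗ[R] U'}
    {g : M →ₗ[R] N →ₗ[R] Q} {g' : M' →ₗ[R] N' →ₗ[R] Q'}
    {h : M →ₗ[R] S →ₗ[R] U} {h' : M' →ₗ[R] S' →ₗ[R] U'}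
    {k : N →ₗ[R] P →ₗ[R] S} {k' : N' →ₗ[R] P' →ₗ[R] S'}
    (H : ∀ m n p, f (g m n) p = h m (k n p)) (H' : ∀ m n p, f' (g' m n) p = h' m (k' n p))
    (x : M ⊗[R] M') (y : N ⊗[R] N') (z : P ⊗[R] P') :
    map₂ f f' (map₂ g g' x y) z = map₂ h h' x (map₂ k k' y z) := by
  have bilinear_eq : (map₂ g g').compr₂ (map₂ f f') =
      ((LinearMap.llcomp R _ _ _).compl₁₂ (map₂ h h') (map₂ k k')) := by
    ext m m' n n' p p'
    simp [H, H']
  exact LinearMap.congr_fun (LinearMap.congr_fun₂ bilinear_eq x y) z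

theorem mul_eq_map₂ {A C : Type*} [Semiring A] [Algebra R A] [Semiring C] [Algebra R C]
    (x y : A ⊗[R] C) : x * y = map₂ (LinearMap.mul R A) (LinearMap.mul R C) x y := by
  have bilinear_eq : LinearMap.mul R (A ⊗[R] C) = map₂ (LinearMap.mul R A) (LinearMap.mul R C) := by
    ext a c a' c'
    simp
  exact LinearMap.congr_fun₂ bilinear_eq x y

end TensorProductMap₂

section TensorPower

variable {K B}

theorem split_tprod (n : ℕ) (v : Fin (n + 1) → B) :
    split K B n (PiTensorProduct.tprod K v) =
      v 0 ⊗ₜ PiTensorProduct.tprod K (Fin.tail v) := by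
  have elim_eq (i : Fin (n + 1)) : Sum.elim (fun _ : Fin 1 => v 0) (Fin.tail v)
      (finSumFinEquiv.symm (Fin.cast (Nat.add_comm n 1) i)) = v i := by
    cases i using Fin.cases with
    | zero => rfl
    | succ i =>
      have cast_succ : Fin.cast (Nat.add_comm n 1) i.succ = Fin.natAdd 1 i :=
        Fin.ext (Nat.add_comm i 1)
      rw [cast_succ, finSumFinEquiv_symm_apply_natAdd, Sum.elim_inr, Fin.tail]
  rw [← LinearEquiv.eq_symm_apply]
  simp [split, PiTensorProduct.reindex_symm, elim_eq]

theorem splitLast_tprod (n : ℕ) (v : Fin (n + 1) → B) :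
    splitLast K B n (PiTensorProduct.tprod K v) =
      PiTensorProduct.tprod K (Fin.init v) ⊗ₜ v (Fin.last n) := by
  have elim_eq (i : Fin (n + 1)) : Sum.elim (Fin.init v) (fun _ : Fin 1 => v (Fin.last n))
      (finSumFinEquiv.symm i) = v i := by
    induction i using Fin.lastCases with
    | last => rw [finSumFinEquiv_symm_last, Sum.elim_inr]
    | cast i => rw [finSumFinEquiv_symm_apply_castSucc, Sum.elim_inl, Fin.init]
  rw [← LinearEquiv.eq_symm_apply]
  simp [splitLast, PiTensorProduct.reindex_symm, elim_eq]

variable (K B) in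
/-- The concatenation `(b, y) ↦ b ⊗ y` on tensor powers, inverse to `split`. It is bilinear so that
`TensorProduct.map₂` extends it to `B ⊗ B` and `B^{⊗n} ⊗ B^{⊗n}`, where `comulT` takes values. -/
noncomputable def cons (n : ℕ) : B →ₗ[K] T K B n →ₗ[K] T K B (n + 1) :=
  curry (split K B n).symm.toLinearMap

variable (K B) in
/-- The concatenation `(y, b) ↦ y ⊗ b` on tensor powers, inverse to `splitLast`. -/
noncomputable def snoc (n : ℕ) : T K B n →ₗ[K] B →ₗ[K] T K B (n + 1) :=
  curry (splitLast K B n).symm.toLinearMap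

variable {n : ℕ}

theorem split_symm_tmul (b : B) (y : T K B n) : (split K B n).symm (b ⊗ₜ y) = cons K B n b y :=
  rfl

theorem splitLast_symm_tmul (y : T K B n) (b : B) :
    (splitLast K B n).symm (y ⊗ₜ b) = snoc K B n y b :=
  rfl

theorem split_cons (b : B) (y : T K B n) : split K B n (cons K B n b y) = b ⊗ₜ y :=
  (split K B n).apply_symm_apply _

theorem splitLast_snoc (y : T K B n) (b : B) : splitLast K B n (snoc K B n y b) = y ⊗ₜ b :=
  (splitLast K B n).apply_symm_apply _

theorem cons_tprod (b : B) (v : Fin n → B) :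
    cons K B n b (PiTensorProduct.tprod K v) =
      PiTensorProduct.tprod K (Fin.cons b v : Fin (n + 1) → B) := by
  simp [← split_symm_tmul, LinearEquiv.symm_apply_eq, split_tprod]

theorem snoc_tprod (v : Fin n → B) (b : B) :
    snoc K B n (PiTensorProduct.tprod K v) b =
      PiTensorProduct.tprod K (Fin.snoc v b : Fin (n + 1) → B) := by
  simp [← splitLast_symm_tmul, LinearEquiv.symm_apply_eq, splitLast_tprod]

theorem snoc_cons (a : B) (y : T K B n) (b : B) :
    snoc K B (n + 1) (cons K B n a y) b = cons K B (n + 1) a (snoc K B n y b) := by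
  have linear_eq : (snoc K B (n + 1)).flip b ∘ₗ cons K B n a =
      cons K B (n + 1) a ∘ₗ (snoc K B n).flip b := by
    ext v
    simp [cons_tprod, snoc_tprod, Fin.cons_snoc_eq_snoc_cons]
  exact LinearMap.congr_fun linear_eq y

theorem isEmptyEquiv_symm_eq_smul_one (r : K) :
    (PiTensorProduct.isEmptyEquiv (Fin 0)).symm r = r • (1 : T K B 0) := by
  rw [PiTensorProduct.isEmptyEquiv_symm_apply, PiTensorProduct.one_def]
  exact congrArg _ (congrArg _ (Subsingleton.elim _ _))

theorem snoc_one (b : B) : snoc K B 0 1 b = cons K B 0 b 1 := by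
  rw [PiTensorProduct.one_def, snoc_tprod, cons_tprod]
  exact congrArg _ (funext fun i => by fin_cases i; rfl)

section Ext

variable {M : Type*} [AddCommMonoid M] [Module K M]

theorem hom_ext_zero {f g : T K B 0 →ₗ[K] M} (h : f 1 = g 1) : f = g := by
  ext v
  rwa [Subsingleton.elim v 1]

theorem hom_ext_cons {f g : T K B (n + 1) →ₗ[K] M}
    (h : ∀ b y, f (cons K B n b y) = g (cons K B n b y)) : f = g :=
  (split K B n).symm.eq_comp_toLinearMap_iff _ _ |>.mp (TensorProduct.ext' h)

theorem hom_ext_snoc {f g : T K B (n + 1) →ₗ[K] M}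
    (h : ∀ y b, f (snoc K B n y b) = g (snoc K B n y b)) : f = g :=
  (splitLast K B n).symm.eq_comp_toLinearMap_iff _ _ |>.mp (TensorProduct.ext' h)

end Ext

theorem split_mul (x y : T K B (n + 1)) :
    split K B n (x * y) = split K B n x * split K B n y := by
  have bilinear_eq : (LinearMap.mul K (T K B (n + 1))).compr₂ (split K B n).toLinearMap =
      (LinearMap.mul K (B ⊗[K] T K B n)).compl₁₂ (split K B n).toLinearMap
        (split K B n).toLinearMap := by
    ext v w
    have tail_mul : Fin.tail (v * w) = Fin.tail v * Fin.tail w := rfl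
    simp [split_tprod, tail_mul]
  exact LinearMap.congr_fun₂ bilinear_eq x y

theorem splitLast_mul (x y : T K B (n + 1)) :
    splitLast K B n (x * y) = splitLast K B n x * splitLast K B n y := by
  have bilinear_eq : (LinearMap.mul K (T K B (n + 1))).compr₂ (splitLast K B n).toLinearMap =
      (LinearMap.mul K (T K B n ⊗[K] B)).compl₁₂ (splitLast K B n).toLinearMap
        (splitLast K B n).toLinearMap := by
    ext v w
    have init_mul : Fin.init (v * w) = Fin.init v * Fin.init w := rfl
    simp [splitLast_tprod, init_mul]
  exact LinearMap.congr_fun₂ bilinear_eq x y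

variable (K B) in
/-- `split` as an isomorphism of algebras, for the factorwise product on tensor powers. -/
noncomputable def splitAlgEquiv (n : ℕ) : T K B (n + 1) ≃ₐ[K] B ⊗[K] T K B n :=
  .ofLinearEquiv (split K B n) (split_tprod n 1) split_mul

variable (K B) in
/-- `splitLast` as an isomorphism of algebras, for the factorwise product on tensor powers. -/
noncomputable def splitLastAlgEquiv (n : ℕ) : T K B (n + 1) ≃ₐ[K] T K B n ⊗[K] B :=
  .ofLinearEquiv (splitLast K B n) (splitLast_tprod n 1) splitLast_mul

theorem prodT_cons (b : B) (y : T K B n) :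
    prodT K B (n + 1) (cons K B n b y) = b * prodT K B n y := by
  have linear_eq : prodT K B (n + 1) ∘ₗ cons K B n b = LinearMap.mulLeft K b ∘ₗ prodT K B n := by
    ext v
    simp [cons_tprod, prodT]
  exact LinearMap.congr_fun linear_eq y

theorem prodT_snoc (y : T K B n) (b : B) :
    prodT K B (n + 1) (snoc K B n y b) = prodT K B n y * b := by
  have linear_eq : prodT K B (n + 1) ∘ₗ (snoc K B n).flip b =
      LinearMap.mulRight K b ∘ₗ prodT K B n := by
    ext v
    simp [snoc_tprod, prodT, List.ofFn_succ', List.concat_eq_append, -List.ofFn_succ]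
  exact LinearMap.congr_fun linear_eq y

theorem iterComul_succ :
    iterComul K B (n + 1) =
      (split K B n).symm.toLinearMap ∘ₗ (iterComul K B n).lTensor B ∘ₗ Coalgebra.comul :=
  rfl

theorem iterComul_succ_last :
    iterComul K B (n + 1) =
      (splitLast K B n).symm.toLinearMap ∘ₗ (iterComul K B n).rTensor B ∘ₗ Coalgebra.comul := by
  induction n with
  | zero =>
    ext b
    simp [iterComul, LinearMap.lTensor_comp_apply, LinearMap.rTensor_comp_apply,
      isEmptyEquiv_symm_eq_smul_one, split_symm_tmul, splitLast_symm_tmul, snoc_one,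
      -PiTensorProduct.isEmptyEquiv_symm_apply]
  | succ n ih =>
    have assoc_eq : (split K B (n + 1)).symm.toLinearMap ∘ₗ
        ((splitLast K B n).symm.toLinearMap ∘ₗ (iterComul K B n).rTensor B).lTensor B ∘ₗ
          (TensorProduct.assoc K B B B).toLinearMap =
        (splitLast K B (n + 1)).symm.toLinearMap ∘ₗ
          ((split K B n).symm.toLinearMap ∘ₗ (iterComul K B n).lTensor B).rTensor B := by
      ext a b c
      simp [split_symm_tmul, splitLast_symm_tmul, snoc_cons]
    calc iterComul K B (n + 2)
      _ = (split K B (n + 1)).symm.toLinearMap ∘ₗ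
            ((splitLast K B n).symm.toLinearMap ∘ₗ (iterComul K B n).rTensor B).lTensor B ∘ₗ
              Coalgebra.comul.lTensor B ∘ₗ Coalgebra.comul := by
        rw [iterComul_succ, ih]
        simp only [LinearMap.lTensor_comp, LinearMap.comp_assoc]
      _ = (splitLast K B (n + 1)).symm.toLinearMap ∘ₗ
            ((split K B n).symm.toLinearMap ∘ₗ (iterComul K B n).lTensor B).rTensor B ∘ₗ
              Coalgebra.comul.rTensor B ∘ₗ Coalgebra.comul := by
        rw [← Coalgebra.coassoc]
        simpa only [LinearMap.comp_assoc] using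
          congr($assoc_eq ∘ₗ Coalgebra.comul.rTensor B ∘ₗ Coalgebra.comul)
      _ = _ := by
        rw [iterComul_succ]
        simp only [LinearMap.rTensor_comp, LinearMap.comp_assoc]

theorem comulT_one : comulT K B 0 1 = 1 ⊗ₜ 1 := by
  have one_eq : (1 : T K B 0) = (PiTensorProduct.isEmptyEquiv (Fin 0)).symm 1 := by
    rw [isEmptyEquiv_symm_eq_smul_one, one_smul]
  simp only [one_eq, comulT, LinearMap.comp_apply, LinearEquiv.coe_coe,
    LinearEquiv.apply_symm_apply, lid_symm_apply, congr_tmul]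

theorem comulT_cons (b : B) (y : T K B n) :
    comulT K B (n + 1) (cons K B n b y) =
      map₂ (cons K B n) (cons K B n) (Coalgebra.comul b) (comulT K B n y) := by
  simp only [comulT, LinearMap.comp_apply, LinearEquiv.coe_coe, split_cons, map_tmul]
  generalize comulT K B n y = z
  generalize Coalgebra.comul (R := K) b = x
  have bilinear_eq : ((mk K (B ⊗[K] B) (T K B n ⊗[K] T K B n)).compr₂
      (tensorTensorTensorComm K B B (T K B n) (T K B n)).toLinearMap).compr₂
      (congr (split K B n).symm (split K B n).symm).toLinearMap =
      map₂ (cons K B n) (cons K B n) := by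
    ext a b y z
    rfl
  exact LinearMap.congr_fun₂ bilinear_eq x z

theorem comulT_snoc (y : T K B n) (b : B) :
    comulT K B (n + 1) (snoc K B n y b) =
      map₂ (snoc K B n) (snoc K B n) (comulT K B n y) (Coalgebra.comul b) := by
  induction n with
  | zero =>
    have linear_eq : (comulT K B 1 ∘ₗ (snoc K B 0).flip b) =
        (map₂ (snoc K B 0) (snoc K B 0)).flip (Coalgebra.comul b) ∘ₗ comulT K B 0 := by
      refine hom_ext_zero ?_
      have snoc_eq_cons : map₂ (snoc K B 0) (snoc K B 0) (1 ⊗ₜ 1) =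
          (map₂ (cons K B 0) (cons K B 0)).flip (1 ⊗ₜ 1) := by
        ext a b
        simp [snoc_one]
      simpa [comulT_one, snoc_one, comulT_cons] using
        (LinearMap.congr_fun snoc_eq_cons (Coalgebra.comul b)).symm
    exact LinearMap.congr_fun linear_eq y
  | succ n ih =>
    have linear_eq : (comulT K B (n + 2) ∘ₗ (snoc K B (n + 1)).flip b) =
        (map₂ (snoc K B (n + 1)) (snoc K B (n + 1))).flip (Coalgebra.comul b) ∘ₗ
          comulT K B (n + 1) :=
      hom_ext_cons fun a y => by
        simp only [LinearMap.comp_apply, LinearMap.flip_apply, snoc_cons, comulT_cons, ih,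
          map₂_assoc snoc_cons snoc_cons]
    exact LinearMap.congr_fun linear_eq y

theorem mulAt_zero_cons_cons (a b : B) (y : T K B n) :
    mulAt K B (n + 1) 0 (cons K B (n + 1) a (cons K B n b y)) = cons K B n (a * b) y := by
  simp [mulAt, ← split_symm_tmul]

theorem mulAt_succ_cons (i : ℕ) (b : B) (y : T K B (n + 1)) :
    mulAt K B (n + 1) (i + 1) (cons K B (n + 1) b y) = cons K B n b (mulAt K B n i y) := by
  simp [mulAt, ← split_symm_tmul]

theorem prodT_comp_mulAt {i : ℕ} (h : i < n) :
    prodT K B n ∘ₗ mulAt K B n i = prodT K B (n + 1) := by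
  induction n generalizing i with
  | zero => omega
  | succ n ih =>
    refine hom_ext_cons fun a y => ?_
    cases i with
    | zero =>
      have linear_eq : prodT K B (n + 1) ∘ₗ mulAt K B (n + 1) 0 ∘ₗ cons K B (n + 1) a =
          prodT K B (n + 2) ∘ₗ cons K B (n + 1) a :=
        hom_ext_cons fun b z => by
          simp [mulAt_zero_cons_cons, prodT_cons, mul_assoc]
      exact LinearMap.congr_fun linear_eq y
    | succ i =>
      simp only [LinearMap.comp_apply, mulAt_succ_cons, prodT_cons]
      rw [← ih (Nat.lt_of_succ_lt_succ h), LinearMap.comp_apply]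

theorem comulT_comp_mulAt {i : ℕ} (h : i < n) :
    comulT K B n ∘ₗ mulAt K B n i =
      map (mulAt K B n i) (mulAt K B n i) ∘ₗ comulT K B (n + 1) := by
  induction n generalizing i with
  | zero => omega
  | succ n ih =>
    refine hom_ext_cons fun a y => ?_
    cases i with
    | zero =>
      have linear_eq : comulT K B (n + 1) ∘ₗ mulAt K B (n + 1) 0 ∘ₗ cons K B (n + 1) a =
          map (mulAt K B (n + 1) 0) (mulAt K B (n + 1) 0) ∘ₗ comulT K B (n + 2) ∘ₗ
            cons K B (n + 1) a :=
        hom_ext_cons fun b z => by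
          have assoc (a b : B) (z : T K B n) :
              cons K B n (LinearMap.mul K B a b) z =
                (cons K B (n + 1)).compr₂ (mulAt K B (n + 1) 0) a (cons K B n b z) :=
            (mulAt_zero_cons_cons a b z).symm
          simp only [LinearMap.comp_apply, mulAt_zero_cons_cons, comulT_cons,
            Bialgebra.comul_mul, mul_eq_map₂, map_map₂_eq_map₂_compr₂]
          exact map₂_assoc assoc assoc _ _ _
      exact LinearMap.congr_fun linear_eq y
    | succ i =>
      have ih_apply := LinearMap.congr_fun (ih (Nat.lt_of_succ_lt_succ h)) y
      simp only [LinearMap.comp_apply] at ih_apply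
      simp only [LinearMap.comp_apply, mulAt_succ_cons, comulT_cons, ih_apply]
      rw [map_map₂ (a := .id) (a' := .id) (mulAt_succ_cons i) (mulAt_succ_cons i), map_id,
        LinearMap.id_apply]

theorem exists_algHom_toLinearMap_eq_comulAt {j : ℕ} (h : j < n) :
    ∃ φ : T K B n →ₐ[K] T K B (n + 1), φ.toLinearMap = comulAt K B n j := by
  induction n generalizing j with
  | zero => omega
  | succ n ih =>
    cases j with
    | zero =>
      let φ : B ⊗[K] T K B n →ₐ[K] B ⊗[K] T K B (n + 1) :=
        (Algebra.TensorProduct.map (.id K B) (splitAlgEquiv K B n).symm.toAlgHom).comp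
          ((Algebra.TensorProduct.assoc K K K B B (T K B n)).toAlgHom.comp
            (Algebra.TensorProduct.map (Bialgebra.comulAlgHom K B) (.id K (T K B n))))
      exact ⟨(splitAlgEquiv K B (n + 1)).symm.toAlgHom.comp
        (φ.comp (splitAlgEquiv K B n).toAlgHom), rfl⟩
    | succ j =>
      obtain ⟨φ, hφ⟩ := ih (Nat.lt_of_succ_lt_succ h)
      refine ⟨(splitAlgEquiv K B (n + 1)).symm.toAlgHom.comp
        ((Algebra.TensorProduct.map (.id K B) φ).comp (splitAlgEquiv K B n).toAlgHom), ?_⟩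
      rw [comulAt, ← hφ]
      rfl

theorem comulAt_comp_iterComul {j : ℕ} (h : j < n) :
    comulAt K B n j ∘ₗ iterComul K B n = iterComul K B (n + 1) := by
  induction n generalizing j with
  | zero => omega
  | succ n ih =>
    cases j with
    | zero =>
      have comul_comm : Coalgebra.comul.rTensor (T K B n) ∘ₗ (iterComul K B n).lTensor B =
          (iterComul K B n).lTensor (B ⊗[K] B) ∘ₗ Coalgebra.comul.rTensor B := by
        rw [LinearMap.rTensor_comp_lTensor, LinearMap.lTensor_comp_rTensor]
      have assoc_lTensor : (TensorProduct.assoc K B B (T K B n)).toLinearMap ∘ₗ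
          (iterComul K B n).lTensor (B ⊗[K] B) =
          ((iterComul K B n).lTensor B).lTensor B ∘ₗ (TensorProduct.assoc K B B B).toLinearMap := by
        ext a b c
        simp
      calc comulAt K B (n + 1) 0 ∘ₗ iterComul K B (n + 1)
        _ = (split K B (n + 1)).symm.toLinearMap ∘ₗ (split K B n).symm.toLinearMap.lTensor B ∘ₗ
              (TensorProduct.assoc K B B (T K B n)).toLinearMap ∘ₗ
                (iterComul K B n).lTensor (B ⊗[K] B) ∘ₗ
                  Coalgebra.comul.rTensor B ∘ₗ Coalgebra.comul := by
          rw [← LinearMap.comp_assoc Coalgebra.comul (Coalgebra.comul.rTensor B), ← comul_comm]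
          ext b
          simp only [comulAt, iterComul_succ, LinearMap.comp_apply, LinearEquiv.coe_coe,
            LinearEquiv.apply_symm_apply]
        _ = (split K B (n + 1)).symm.toLinearMap ∘ₗ (split K B n).symm.toLinearMap.lTensor B ∘ₗ
              ((iterComul K B n).lTensor B).lTensor B ∘ₗ
                Coalgebra.comul.lTensor B ∘ₗ Coalgebra.comul := by
          rw [← LinearMap.comp_assoc _ _ (TensorProduct.assoc K B B (T K B n)).toLinearMap,
            assoc_lTensor, LinearMap.comp_assoc, Coalgebra.coassoc]
        _ = iterComul K B (n + 2) := by
          simp only [iterComul_succ, LinearMap.lTensor_comp, LinearMap.comp_assoc]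
    | succ j =>
      rw [iterComul_succ, iterComul_succ (n := n + 1), ← ih (Nat.lt_of_succ_lt_succ h)]
      ext b
      simp [comulAt, LinearMap.lTensor_comp_apply]

section Products

variable {A C : Type*} [Semiring A] [Algebra K A] [Semiring C] [Algebra K C]

variable (K B) in
/-- The product `b ⊗ y ↦ φ b * f y` of `φ` on the first tensor factor and `f` on the others, with
values in an algebra. -/
noncomputable def mulCons (n : ℕ) :
    (B →ₗ[K] A) →ₗ[K] (T K B n →ₗ[K] A) →ₗ[K] (T K B (n + 1) →ₗ[K] A) :=
  (mapBilinear (.id K) B (T K B n) A A).compr₂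
    ((split K B n).toLinearMap.lcomp K A ∘ₗ (LinearMap.mul' K A).compRight K)

theorem mulCons_cons (φ : B →ₗ[K] A) (f : T K B n →ₗ[K] A) (b : B) (y : T K B n) :
    mulCons K B n φ f (cons K B n b y) = φ b * f y := by
  simp [mulCons, split_cons]

variable (K B) in
/-- The product `y ⊗ b ↦ f y * φ b` of `f` on all tensor factors but the last and `φ` on the last,
with values in an algebra. -/
noncomputable def mulSnoc (n : ℕ) :
    (T K B n →ₗ[K] A) →ₗ[K] (B →ₗ[K] A) →ₗ[K] (T K B (n + 1) →ₗ[K] A) :=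
  (mapBilinear (.id K) (T K B n) B A A).compr₂
    ((splitLast K B n).toLinearMap.lcomp K A ∘ₗ (LinearMap.mul' K A).compRight K)

theorem mulSnoc_snoc (f : T K B n →ₗ[K] A) (φ : B →ₗ[K] A) (y : T K B n) (b : B) :
    mulSnoc K B n f φ (snoc K B n y b) = f y * φ b := by
  simp [mulSnoc, splitLast_snoc]

theorem algHom_comp_mulCons (α : A →ₐ[K] C) (φ : B →ₗ[K] A) (f : T K B n →ₗ[K] A) :
    α.toLinearMap ∘ₗ mulCons K B n φ f =
      mulCons K B n (α.toLinearMap ∘ₗ φ) (α.toLinearMap ∘ₗ f) :=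
  hom_ext_cons fun b y => by simp [mulCons_cons]

theorem algHom_comp_mulSnoc (α : A →ₐ[K] C) (f : T K B n →ₗ[K] A) (φ : B →ₗ[K] A) :
    α.toLinearMap ∘ₗ mulSnoc K B n f φ =
      mulSnoc K B n (α.toLinearMap ∘ₗ f) (α.toLinearMap ∘ₗ φ) :=
  hom_ext_snoc fun y b => by simp [mulSnoc_snoc]

theorem map_mulCons_comp_comulT (φ : B →ₗ[K] A) (f : T K B n →ₗ[K] A) (ψ : B →ₗ[K] C)
    (g : T K B n →ₗ[K] C) :
    map (mulCons K B n φ f) (mulCons K B n ψ g) ∘ₗ comulT K B (n + 1) =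
      mulCons K B n (map φ ψ ∘ₗ Coalgebra.comul) (map f g ∘ₗ comulT K B n) :=
  hom_ext_cons fun b y => by
    rw [LinearMap.comp_apply, comulT_cons, mulCons_cons, mul_eq_map₂]
    exact map_map₂ (mulCons_cons φ f) (mulCons_cons ψ g) _ _

theorem map_mulSnoc_comp_comulT (f : T K B n →ₗ[K] A) (φ : B →ₗ[K] A) (g : T K B n →ₗ[K] C)
    (ψ : B →ₗ[K] C) :
    map (mulSnoc K B n f φ) (mulSnoc K B n g ψ) ∘ₗ comulT K B (n + 1) =
      mulSnoc K B n (map f g ∘ₗ comulT K B n) (map φ ψ ∘ₗ Coalgebra.comul) :=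
  hom_ext_snoc fun y b => by
    rw [LinearMap.comp_apply, comulT_snoc, mulSnoc_snoc, mul_eq_map₂]
    exact map_map₂ (mulSnoc_snoc f φ) (mulSnoc_snoc g ψ) _ _

theorem prodT_succ : prodT K B (n + 1) = mulCons K B n .id (prodT K B n) :=
  hom_ext_cons fun b y => by rw [prodT_cons, mulCons_cons, LinearMap.id_apply]

theorem prodT_succ_last : prodT K B (n + 1) = mulSnoc K B n (prodT K B n) .id :=
  hom_ext_snoc fun y b => by rw [prodT_snoc, mulSnoc_snoc, LinearMap.id_apply]

end Products

section Cofaces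

variable (K B) in
/-- The cofaces whose alternating sum is `δ_h^{p,q}`: the left action `λ^p ∘ (Id ⊗ f)` for `i = 0`,
precomposition with `μ_i` for `1 ≤ i ≤ q`, the right action `ρ^p ∘ (f ⊗ Id)` for `i = q + 1`.
Indices `i > q + 1` repeat the last coface. -/
noncomputable def hochschildCoface (p q : ℕ) :
    ℕ → (T K B q →ₗ[K] T K B p) →ₗ[K] (T K B (q + 1) →ₗ[K] T K B p)
  | 0 => mulCons K B q (iterComul K B p)
  | i + 1 => if i < q then (mulAt K B q i).lcomp K _ else (mulSnoc K B q).flip (iterComul K B p)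

variable (K B) in
/-- The cofaces whose alternating sum is `δ_c^{p,q}`: `(Id ⊗ f) ∘ σ^q` for `j = 0`, postcomposition
with `Δ_j` for `1 ≤ j ≤ p`, `(f ⊗ Id) ∘ τ^q` for `j = p + 1`. Indices `j > p + 1` repeat the last
coface. -/
noncomputable def cohochschildCoface (p q : ℕ) :
    ℕ → (T K B q →ₗ[K] T K B p) →ₗ[K] (T K B q →ₗ[K] T K B (p + 1))
  | 0 => (split K B p).symm.toLinearMap.compRight K ∘ₗ (comulT K B q).lcomp K _ ∘ₗ
      mapBilinear (.id K) (T K B q) (T K B q) B (T K B p) (prodT K B q)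
  | j + 1 =>
      if j < p then (comulAt K B p j).compRight K
      else (splitLast K B p).symm.toLinearMap.compRight K ∘ₗ (comulT K B q).lcomp K _ ∘ₗ
        (mapBilinear (.id K) (T K B q) (T K B q) (T K B p) B).flip (prodT K B q)

variable (p q : ℕ) (f : T K B q →ₗ[K] T K B p)

theorem cohochschildCoface_zero_apply :
    cohochschildCoface K B p q 0 f =
      (split K B p).symm.toLinearMap ∘ₗ map (prodT K B q) f ∘ₗ comulT K B q :=
  rfl

theorem cohochschildCoface_apply_of_le {j : ℕ} (h : p ≤ j) :
    cohochschildCoface K B p q (j + 1) f =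
      (splitLast K B p).symm.toLinearMap ∘ₗ map f (prodT K B q) ∘ₗ comulT K B q := by
  rw [cohochschildCoface, if_neg h.not_gt]
  rfl

theorem cohochschildCoface_apply_of_lt {j : ℕ} (h : j < p) :
    cohochschildCoface K B p q (j + 1) f = comulAt K B p j ∘ₗ f := by
  rw [cohochschildCoface, if_pos h]
  rfl

theorem cohochschildCoface_comp_mulAt (j : ℕ) {i : ℕ} (h : i < q) :
    cohochschildCoface K B p (q + 1) j (f ∘ₗ mulAt K B q i) =
      cohochschildCoface K B p q j f ∘ₗ mulAt K B q i := by
  rcases j with - | j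
  · simp only [cohochschildCoface_zero_apply, LinearMap.comp_assoc, comulT_comp_mulAt h]
    rw [← prodT_comp_mulAt h, map_comp, LinearMap.comp_assoc]
  · rcases lt_or_ge j p with hj | hj
    · simp only [cohochschildCoface_apply_of_lt _ _ _ hj, LinearMap.comp_assoc]
    · simp only [cohochschildCoface_apply_of_le _ _ _ hj, LinearMap.comp_assoc,
        comulT_comp_mulAt h]
      rw [← prodT_comp_mulAt h, map_comp, LinearMap.comp_assoc]

theorem cohochschildCoface_mulCons (j : ℕ) :
    cohochschildCoface K B p (q + 1) j (mulCons K B q (iterComul K B p) f) =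
      mulCons K B q (iterComul K B (p + 1)) (cohochschildCoface K B p q j f) := by
  rcases j with - | j
  · rw [cohochschildCoface_zero_apply, prodT_succ, map_mulCons_comp_comulT]
    exact algHom_comp_mulCons (splitAlgEquiv K B p).symm.toAlgHom _ _
  · rcases lt_or_ge j p with hj | hj
    · obtain ⟨φ, hφ⟩ := exists_algHom_toLinearMap_eq_comulAt (K := K) (B := B) hj
      rw [cohochschildCoface_apply_of_lt _ _ _ hj, cohochschildCoface_apply_of_lt _ _ _ hj,
        ← comulAt_comp_iterComul hj, ← hφ, algHom_comp_mulCons]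
    · rw [cohochschildCoface_apply_of_le _ _ _ hj, cohochschildCoface_apply_of_le _ _ _ hj,
        prodT_succ, map_mulCons_comp_comulT, iterComul_succ_last]
      exact algHom_comp_mulCons (splitLastAlgEquiv K B p).symm.toAlgHom _ _

theorem cohochschildCoface_mulSnoc (j : ℕ) :
    cohochschildCoface K B p (q + 1) j (mulSnoc K B q f (iterComul K B p)) =
      mulSnoc K B q (cohochschildCoface K B p q j f) (iterComul K B (p + 1)) := by
  rcases j with - | j
  · rw [cohochschildCoface_zero_apply, prodT_succ_last, map_mulSnoc_comp_comulT]
    exact algHom_comp_mulSnoc (splitAlgEquiv K B p).symm.toAlgHom _ _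
  · rcases lt_or_ge j p with hj | hj
    · obtain ⟨φ, hφ⟩ := exists_algHom_toLinearMap_eq_comulAt (K := K) (B := B) hj
      rw [cohochschildCoface_apply_of_lt _ _ _ hj, cohochschildCoface_apply_of_lt _ _ _ hj,
        ← comulAt_comp_iterComul hj, ← hφ, algHom_comp_mulSnoc]
    · rw [cohochschildCoface_apply_of_le _ _ _ hj, cohochschildCoface_apply_of_le _ _ _ hj,
        prodT_succ_last, map_mulSnoc_comp_comulT, iterComul_succ_last]
      exact algHom_comp_mulSnoc (splitLastAlgEquiv K B p).symm.toAlgHom _ _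

theorem cohochschildCoface_hochschildCoface (i j : ℕ) :
    cohochschildCoface K B p (q + 1) j (hochschildCoface K B p q i f) =
      hochschildCoface K B (p + 1) q i (cohochschildCoface K B p q j f) := by
  rcases i with - | i
  · exact cohochschildCoface_mulCons p q f j
  · by_cases hi : i < q
    · simp only [hochschildCoface, if_pos hi]
      exact cohochschildCoface_comp_mulAt p q f j hi
    · simp only [hochschildCoface, if_neg hi]
      exact cohochschildCoface_mulSnoc p q f j

theorem deltaH_eq_sum_hochschildCoface :
    deltaH K B p q f =
      ∑ i ∈ Finset.range (q + 2), (-1 : K) ^ i • hochschildCoface K B p q i f := by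
  have left_eq : lamMap K B p ∘ₗ (split K B p).symm.toLinearMap ∘ₗ f.lTensor B ∘ₗ
      (split K B q).toLinearMap = hochschildCoface K B p q 0 f :=
    hom_ext_cons fun b y => by
      simp only [hochschildCoface, mulCons_cons, lamMap, LinearMap.comp_apply,
        LinearEquiv.coe_coe, split_cons, LinearMap.lTensor_tmul, LinearEquiv.apply_symm_apply,
        map_tmul, LinearMap.id_apply, LinearMap.mul'_apply]
  have right_eq : rhoMap K B p ∘ₗ (splitLast K B p).symm.toLinearMap ∘ₗ f.rTensor B ∘ₗ
      (splitLast K B q).toLinearMap = hochschildCoface K B p q (q + 1) f :=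
    hom_ext_snoc fun y b => by
      simp only [hochschildCoface, lt_self_iff_false, if_false, LinearMap.flip_apply,
        mulSnoc_snoc, rhoMap, LinearMap.comp_apply, LinearEquiv.coe_coe, splitLast_snoc,
        LinearMap.rTensor_tmul, LinearEquiv.apply_symm_apply, map_tmul, LinearMap.id_apply,
        LinearMap.mul'_apply]
  have middle_eq : ∀ i ∈ Finset.range q, (-1 : K) ^ (i + 1) • (f ∘ₗ mulAt K B q i) =
      (-1 : K) ^ (i + 1) • hochschildCoface K B p q (i + 1) f := fun i hi => by
    rw [hochschildCoface, if_pos (Finset.mem_range.mp hi), LinearMap.lcomp_apply']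
  simp only [deltaH, ← Int.cast_smul_eq_zsmul K, Int.cast_pow, Int.cast_neg, Int.cast_one]
  rw [left_eq, right_eq, Finset.sum_congr rfl middle_eq, Finset.sum_range_succ,
    Finset.sum_range_succ', pow_zero, one_smul, add_comm (hochschildCoface K B p q 0 f)]

theorem deltaCv_eq_sum_cohochschildCoface :
    deltaCv K B p q f =
      ∑ j ∈ Finset.range (p + 2), (-1 : K) ^ j • cohochschildCoface K B p q j f := by
  have left_eq : (split K B p).symm.toLinearMap ∘ₗ f.lTensor B ∘ₗ (split K B q).toLinearMap ∘ₗ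
      sigmaMap K B q = cohochschildCoface K B p q 0 f :=
    LinearMap.ext fun x => by
      simp only [cohochschildCoface_zero_apply, sigmaMap, LinearMap.comp_apply,
        LinearEquiv.coe_coe, LinearEquiv.apply_symm_apply, LinearMap.lTensor_map,
        LinearMap.comp_id]
  have right_eq : (splitLast K B p).symm.toLinearMap ∘ₗ f.rTensor B ∘ₗ
      (splitLast K B q).toLinearMap ∘ₗ tauMap K B q = cohochschildCoface K B p q (p + 1) f :=
    LinearMap.ext fun x => by
      simp only [cohochschildCoface_apply_of_le _ _ _ le_rfl, tauMap, LinearMap.comp_apply,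
        LinearEquiv.coe_coe, LinearEquiv.apply_symm_apply, LinearMap.rTensor_map,
        LinearMap.comp_id]
  have middle_eq : ∀ j ∈ Finset.range p, (-1 : K) ^ (j + 1) • (comulAt K B p j ∘ₗ f) =
      (-1 : K) ^ (j + 1) • cohochschildCoface K B p q (j + 1) f := fun j hj => by
    rw [cohochschildCoface_apply_of_lt _ _ _ (Finset.mem_range.mp hj)]
  simp only [deltaCv, ← Int.cast_smul_eq_zsmul K, Int.cast_pow, Int.cast_neg, Int.cast_one]
  rw [left_eq, right_eq, Finset.sum_congr rfl middle_eq, Finset.sum_range_succ,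
    Finset.sum_range_succ', pow_zero, one_smul, add_comm (cohochschildCoface K B p q 0 f)]

end Cofaces

end TensorPower

/-- For all `p, q ≥ 1`, the horizontal and vertical differentials
commute: `δ_c^{p,q+1} ∘ δ_h^{p,q} = δ_h^{p+1,q} ∘ δ_c^{p,q}`, so `(C^{p,q}, δ_h, δ_c)`
is a bicomplex. -/
theorem deltaCv_deltaH_comm (p q : ℕ) (hp : 1 ≤ p) (hq : 1 ≤ q)
    (f : T K B q →ₗ[K] T K B p) :
    deltaCv K B p (q + 1) (deltaH K B p q f) = deltaH K B (p + 1) q (deltaCv K B p q f) := by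
  rw [deltaH_eq_sum_hochschildCoface, deltaCv_eq_sum_cohochschildCoface,
    deltaH_eq_sum_hochschildCoface, deltaCv_eq_sum_cohochschildCoface]
  simp only [map_sum, map_smul, Finset.smul_sum, cohochschildCoface_hochschildCoface]
  rw [Finset.sum_comm]
  exact Finset.sum_congr rfl fun _ _ => Finset.sum_congr rfl fun _ _ => smul_comm _ _ _

end GBD
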